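/- Let M = cQ + εD ∈ 𝔻ℍ[t] be a bounded monic reduced motion polynomial of degree n with monic c ∈ ℝ[t], Q, D ∈ ℍ[t], mrpf(Q) = 1, and ν(M) = c²·ν(Q) = Nⁿ for some irreducible quadratic N ∈ ℝ[t]. Suppose M = (Q_L + εD_L)·(c + εD')·(Q_R + εD_R) with Q_L, Q_R, D_L, D_R, D' ∈ ℍ[t], where each of the three factors is a product of monic linear motion polynomials. Define g_L := mrpf(c, Q*·D) and g_R := mrpf(c, D·Q*). Then g_L divides Q_L·Q_L* and g_R divides Q_R·Q_R* in ℝ[t]. -/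

import Mathlib

open Polynomial DualNumber TrivSqZeroExt

noncomputable section

/-- The real quaternions. -/
abbrev Hq : Type := Quaternion ℝ

/-- The dual quaternions. -/
abbrev DHq : Type := DualNumber Hq

/-- Conjugation of a dual quaternion: `(p + ε d)* = p* + ε d*`. -/
instance : Star DHq := ⟨fun x => inl (star x.fst) + inr (star x.snd)⟩

/-- Coefficient-wise (quaternion) conjugation of a polynomial. -/
def cstar {R : Type*} [Semiring R] [Star R] (A : R[X]) : R[X] :=
  A.sum fun n a => Polynomial.C (star a) * Polynomial.X ^ n

/-- The embedding `ℝ[t] → ℍ[t]`. -/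
def qPoly (f : ℝ[X]) : Hq[X] := f.map (algebraMap ℝ Hq)

/-- The embedding `ℍ[t] → 𝔻ℍ[t]` (primal part). -/
def dhQ (P : Hq[X]) : DHq[X] := P.map (inlHom Hq Hq)

/-- The embedding `ℝ[t] → 𝔻ℍ[t]`. -/
def dPoly (f : ℝ[X]) : DHq[X] := dhQ (qPoly f)

/-- The dual quaternion polynomial `P + ε D` with primal part `P` and dual part `D`. -/
def mp (P D : Hq[X]) : DHq[X] := dhQ P + Polynomial.C ε * dhQ D

/-- The primal part of a dual quaternion polynomial. -/
def primal (A : DHq[X]) : Hq[X] := A.map (fstHom ℝ Hq Hq).toRingHom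

/-- A motion polynomial: a dual quaternion polynomial whose norm polynomial
`ν(M) = M·M*` is a nonzero real polynomial. -/
def IsMotion (M : DHq[X]) : Prop := ∃ f : ℝ[X], f ≠ 0 ∧ M * cstar M = dPoly f

/-- A real polynomial divides a quaternion polynomial. -/
def RDvdQ (f : ℝ[X]) (A : Hq[X]) : Prop := ∃ B : Hq[X], A = qPoly f * B

/-- A real polynomial divides a dual quaternion polynomial. -/
def RDvdD (f : ℝ[X]) (A : DHq[X]) : Prop := ∃ B : DHq[X], A = dPoly f * B

/-- `g` is the greatest common monic real polynomial divisor of a quaternion polynomial `A`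
(with itself), i.e. `g = mrpf A`. -/
def IsMrpfQ (g : ℝ[X]) (A : Hq[X]) : Prop :=
  g.Monic ∧ RDvdQ g A ∧ ∀ f : ℝ[X], f.Monic → RDvdQ f A → f ∣ g

/-- `g` is the greatest common monic real polynomial divisor of `c ∈ ℝ[t]` and a quaternion
polynomial `A`, i.e. `g = mrpf(c, A)`. -/
def IsMrpf2 (g : ℝ[X]) (c : ℝ[X]) (A : Hq[X]) : Prop :=
  g.Monic ∧ g ∣ c ∧ RDvdQ g A ∧
    ∀ f : ℝ[X], f.Monic → f ∣ c → RDvdQ f A → f ∣ g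

/-- `g` is the greatest common monic real polynomial divisor of `c ∈ ℝ[t]` and two quaternion
polynomials `A` and `B`, i.e. `g = mrpf(c, A, B)`. -/
def IsMrpf3 (g : ℝ[X]) (c : ℝ[X]) (A B : Hq[X]) : Prop :=
  g.Monic ∧ g ∣ c ∧ RDvdQ g A ∧ RDvdQ g B ∧
    ∀ f : ℝ[X], f.Monic → f ∣ c → RDvdQ f A → RDvdQ f B → f ∣ g

/-- A quaternion polynomial is reduced: `mrpf = 1`, i.e. it has only constant real
polynomial factors. -/
def ReducedQ (A : Hq[X]) : Prop := ∀ f : ℝ[X], f.Monic → RDvdQ f A → f = 1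

/-- A dual quaternion polynomial is reduced: `mrpf = 1`. -/
def ReducedD (A : DHq[X]) : Prop := ∀ f : ℝ[X], f.Monic → RDvdD f A → f = 1

/-- Boundedness of a (monic reduced) motion polynomial: `mrpf` of its primal part has
no real root, equivalently no linear real polynomial `t - a` divides the primal part. -/
def BoundedD (M : DHq[X]) : Prop :=
  ∀ a : ℝ, ¬ RDvdQ (Polynomial.X - Polynomial.C a) (primal M)

/-- A generic motion polynomial: monic, a motion polynomial, with `mrpf` of the primal
part equal to `1`. -/
def GenericD (M : DHq[X]) : Prop :=
  M.Monic ∧ IsMotion M ∧ ReducedQ (primal M)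

/-- The monic linear dual quaternion polynomial `t - p - ε d`. -/
def lin (p d : Hq) : DHq[X] := mp (Polynomial.X - Polynomial.C p) (-Polynomial.C d)

/-- `M` admits a factorization into monic linear motion polynomial factors. -/
def HasLinFact (M : DHq[X]) : Prop :=
  ∃ L : List DHq, (∀ h ∈ L, IsMotion (Polynomial.X - Polynomial.C h)) ∧
    M = (L.map fun h => Polynomial.X - Polynomial.C h).prod

end
section Helpers

theorem cstar_coeff_q (A : Hq[X]) (n : ℕ) : (cstar A).coeff n = star (A.coeff n) := by
  unfold cstar
  rw [Polynomial.sum_def, Polynomial.finsetSum_coeff]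
  simp only [Polynomial.coeff_C_mul_X_pow]
  rw [Finset.sum_ite_eq]
  split_ifs with h
  · rfl
  · rw [Polynomial.notMem_support_iff.1 h]; simp

theorem star_dh (x : DHq) : star x = inl (star x.fst) + inr (star x.snd) := rfl

theorem cstar_coeff_d (A : DHq[X]) (n : ℕ) : (cstar A).coeff n = star (A.coeff n) := by
  unfold cstar
  rw [Polynomial.sum_def, Polynomial.finsetSum_coeff]
  simp only [Polynomial.coeff_C_mul_X_pow]
  rw [Finset.sum_ite_eq]
  split_ifs with h
  · rfl
  · rw [Polynomial.notMem_support_iff.1 h]; simp [star_dh]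

theorem cstar_mul_q (A B : Hq[X]) : cstar (A * B) = cstar B * cstar A := by
  ext1 n
  rw [cstar_coeff_q, Polynomial.coeff_mul, Polynomial.coeff_mul, star_sum,
    ← Finset.Nat.sum_antidiagonal_swap]
  refine Finset.sum_congr rfl fun x _ => ?_
  simp [cstar_coeff_q]

theorem cstar_add_q (A B : Hq[X]) : cstar (A + B) = cstar A + cstar B := by
  ext1 n; simp [cstar_coeff_q]

theorem cstar_neg_q (A : Hq[X]) : cstar (-A) = -cstar A := by
  ext1 n; simp [cstar_coeff_q]

theorem cstar_cstar_q (A : Hq[X]) : cstar (cstar A) = A := by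
  ext1 n; simp [cstar_coeff_q]

theorem cstar_C_q (a : Hq) : cstar (C a) = C (star a) := by
  ext1 n; rw [cstar_coeff_q, coeff_C, coeff_C]; split_ifs <;> simp

theorem cstar_X_sub_C_q (a : Hq) : cstar (X - C a) = X - C (star a) := by
  ext1 n; rw [cstar_coeff_q, coeff_sub, coeff_sub, coeff_C, coeff_C, coeff_X]
  split_ifs <;> simp

theorem cstar_qPoly (f : ℝ[X]) : cstar (qPoly f) = qPoly f := by
  ext1 n; rw [cstar_coeff_q]; simp only [qPoly, coeff_map]
  exact Quaternion.star_coe _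

theorem qPoly_mul (f g : ℝ[X]) : qPoly (f * g) = qPoly f * qPoly g := by simp [qPoly]
theorem qPoly_add (f g : ℝ[X]) : qPoly (f + g) = qPoly f + qPoly g := by simp [qPoly]
theorem qPoly_one : qPoly 1 = 1 := by simp [qPoly]

theorem qPoly_inj {f g : ℝ[X]} (h : qPoly f = qPoly g) : f = g :=
  Polynomial.map_injective _ (algebraMap ℝ Hq).injective h

theorem qPoly_ne {f : ℝ[X]} (h : f ≠ 0) : qPoly f ≠ 0 := fun h0 =>
  h (qPoly_inj (by rw [h0]; simp [qPoly]))

theorem qPoly_comm (f : ℝ[X]) (A : Hq[X]) : qPoly f * A = A * qPoly f := by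
  ext1 n
  rw [Polynomial.coeff_mul, Polynomial.coeff_mul, ← Finset.Nat.sum_antidiagonal_swap]
  refine Finset.sum_congr rfl fun x _ => ?_
  simp only [qPoly, coeff_map, Prod.fst_swap, Prod.snd_swap]
  exact Algebra.commutes _ _

theorem real_of_cstar {A : Hq[X]} (h : cstar A = A) : ∃ f : ℝ[X], A = qPoly f := by
  refine ⟨∑ i ∈ A.support, monomial i (A.coeff i).re, ?_⟩
  ext1 n
  simp only [qPoly, coeff_map, finsetSum_coeff, coeff_monomial]
  rw [Finset.sum_ite_eq']
  have h1 : star (A.coeff n) = A.coeff n := by rw [← cstar_coeff_q, h]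
  rw [Quaternion.star_eq_self] at h1
  split_ifs with hn
  · exact h1
  · rw [Polynomial.notMem_support_iff.1 hn]; simp

theorem exists_nu (A : Hq[X]) : ∃ f : ℝ[X], A * cstar A = qPoly f ∧ cstar A * A = qPoly f := by
  obtain ⟨f, hf⟩ := real_of_cstar (A := A * cstar A) (by rw [cstar_mul_q, cstar_cstar_q])
  refine ⟨f, hf, ?_⟩
  by_cases hA : A = 0
  · rw [← hf, hA]; simp
  · apply mul_left_cancel₀ hA
    rw [← mul_assoc, hf, qPoly_comm]

theorem tr_comm (A B : Hq[X]) : A * B + cstar (A * B) = B * A + cstar (B * A) := by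
  ext1 n
  simp only [coeff_add, cstar_coeff_q]
  rw [Polynomial.coeff_mul, Polynomial.coeff_mul, ← Finset.Nat.sum_antidiagonal_swap, star_sum,
    star_sum, ← Finset.sum_add_distrib, ← Finset.sum_add_distrib]
  refine Finset.sum_congr rfl fun x _ => ?_
  simp only [Prod.fst_swap, Prod.snd_swap]
  ext <;> simp <;> ring

theorem RDvdQ.add {f : ℝ[X]} {A B : Hq[X]} (h1 : RDvdQ f A) (h2 : RDvdQ f B) :
    RDvdQ f (A + B) := by
  obtain ⟨a, rfl⟩ := h1
  obtain ⟨b, rfl⟩ := h2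
  exact ⟨a + b, by rw [mul_add]⟩

theorem RDvdQ.neg {f : ℝ[X]} {A : Hq[X]} (h1 : RDvdQ f A) : RDvdQ f (-A) := by
  obtain ⟨a, rfl⟩ := h1
  exact ⟨-a, by rw [mul_neg]⟩

theorem RDvdQ.mul_right {f : ℝ[X]} {A : Hq[X]} (h1 : RDvdQ f A) (B : Hq[X]) :
    RDvdQ f (A * B) := by
  obtain ⟨a, rfl⟩ := h1
  exact ⟨a * B, by rw [mul_assoc]⟩

theorem RDvdQ.mul_left {f : ℝ[X]} {A : Hq[X]} (h1 : RDvdQ f A) (B : Hq[X]) :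
    RDvdQ f (B * A) := by
  obtain ⟨a, rfl⟩ := h1
  exact ⟨B * a, by rw [← mul_assoc, ← qPoly_comm, mul_assoc]⟩

theorem RDvdQ.cstar {f : ℝ[X]} {A : Hq[X]} (h1 : RDvdQ f A) : RDvdQ f (cstar A) := by
  obtain ⟨a, rfl⟩ := h1
  exact ⟨_, by rw [cstar_mul_q, cstar_qPoly, ← qPoly_comm]⟩

theorem RDvdQ.of_dvd {f g : ℝ[X]} (h : f ∣ g) : RDvdQ f (qPoly g) := by
  obtain ⟨a, rfl⟩ := h
  exact ⟨qPoly a, qPoly_mul _ _⟩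

theorem RDvdQ.trans {f g : ℝ[X]} {A : Hq[X]} (h : f ∣ g) (h2 : RDvdQ g A) : RDvdQ f A := by
  obtain ⟨a, rfl⟩ := h2
  exact (RDvdQ.of_dvd h).mul_right _

theorem RDvdQ.cancel {f g : ℝ[X]} {A : Hq[X]} (hg : g ≠ 0)
    (h : RDvdQ (g * f) (qPoly g * A)) : RDvdQ f A := by
  obtain ⟨a, ha⟩ := h
  rw [qPoly_mul, mul_assoc] at ha
  exact ⟨a, mul_left_cancel₀ (qPoly_ne hg) ha⟩

theorem RDvdQ.prime {N s : ℝ[X]} (hN : Irreducible N) {A : Hq[X]}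
    (h : RDvdQ N (qPoly s * A)) : N ∣ s ∨ RDvdQ N A := by
  by_cases hs : N ∣ s
  · exact Or.inl hs
  · right
    obtain ⟨a, b, hab⟩ := (hN.coprime_iff_not_dvd).2 hs
    have : A = qPoly N * (qPoly a * A) + qPoly b * (qPoly s * A) := by
      rw [← mul_assoc, ← mul_assoc, ← qPoly_mul, ← qPoly_mul, ← add_mul, ← qPoly_add,
        mul_comm N a, hab, qPoly_one, one_mul]
    rw [this]
    exact RDvdQ.add ⟨_, rfl⟩ (h.mul_left _)

theorem four_q (x i j k : Hq) (a : ℝ) (ha : a * 2 = 1)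
    (hi : i.re = 0 ∧ i.imI = 1 ∧ i.imJ = 0 ∧ i.imK = 0)
    (hj : j.re = 0 ∧ j.imI = 0 ∧ j.imJ = 1 ∧ j.imK = 0)
    (hk : k.re = 0 ∧ k.imI = 0 ∧ k.imJ = 0 ∧ k.imK = 1) :
    x = (a : Hq) * ((x * 1 + star (x * 1)) * 1 + (x * i + star (x * i)) * -i
      + (x * j + star (x * j)) * -j + (x * k + star (x * k)) * -k) := by
  obtain rfl : a = 1 / 2 := by linarith
  rw [Quaternion.coe_mul_eq_smul]
  obtain ⟨i1, i2, i3, i4⟩ := hi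
  obtain ⟨j1, j2, j3, j4⟩ := hj
  obtain ⟨k1, k2, k3, k4⟩ := hk
  ext <;> simp [*] <;> ring

theorem four_id (A : Hq[X]) : ∃ a i j k : Hq, A = C a *
    ((A * C 1 + cstar (A * C 1)) * C 1
    + (A * C i + cstar (A * C i)) * C (-i)
    + (A * C j + cstar (A * C j)) * C (-j)
    + (A * C k + cstar (A * C k)) * C (-k)) := by
  obtain ⟨i, hi⟩ : ∃ i : Hq, i.re = 0 ∧ i.imI = 1 ∧ i.imJ = 0 ∧ i.imK = 0 :=
    ⟨⟨0,1,0,0⟩, rfl, rfl, rfl, rfl⟩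
  obtain ⟨j, hj⟩ : ∃ j : Hq, j.re = 0 ∧ j.imI = 0 ∧ j.imJ = 1 ∧ j.imK = 0 :=
    ⟨⟨0,0,1,0⟩, rfl, rfl, rfl, rfl⟩
  obtain ⟨k, hk⟩ : ∃ k : Hq, k.re = 0 ∧ k.imI = 0 ∧ k.imJ = 0 ∧ k.imK = 1 :=
    ⟨⟨0,0,0,1⟩, rfl, rfl, rfl, rfl⟩
  refine ⟨((1/2 : ℝ) : Hq), i, j, k, ?_⟩
  ext1 n
  have := four_q (A.coeff n) i j k (1/2) (by norm_num) hi hj hk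
  simp only [coeff_C_mul, coeff_add, coeff_mul_C, cstar_coeff_q]
  exact this

theorem core {N : ℝ[X]} (hN : Irreducible N) {W u : Hq[X]} (hW : cstar W = -W)
    (hWW : RDvdQ N (W * W)) (h : RDvdQ N (cstar u * W * u)) : RDvdQ N (W * u) := by
  by_contra hcon
  have hy : ¬ RDvdQ N (cstar u * W) := fun h' => hcon (by
    have := h'.cstar.neg
    rwa [cstar_mul_q, cstar_cstar_q, hW, neg_mul, neg_neg] at this)
  have key : ∀ z : Hq[X], RDvdQ N (W * u * z + cstar (W * u * z)) := by
    intro z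
    rw [mul_assoc, tr_comm]
    obtain ⟨s, hs⟩ := real_of_cstar (A := u * z * W + cstar (u * z * W))
      (by rw [cstar_add_q, cstar_cstar_q, add_comm])
    have h1 : RDvdQ N (qPoly s * (cstar u * W)) := by
      rw [qPoly_comm, ← hs, mul_add]
      apply RDvdQ.add
      · have := h.mul_right (z * W)
        simpa only [mul_assoc] using this
      · rw [cstar_mul_q (u * z), hW]
        have := ((hWW.mul_left (cstar u)).mul_right (-cstar (u * z)))
        simpa only [mul_assoc, neg_mul, mul_neg] using this
    rcases RDvdQ.prime hN h1 with h2 | h2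
    · rw [hs]; exact RDvdQ.of_dvd h2
    · exact absurd h2 hy
  apply hcon
  obtain ⟨a, i, j, k, he⟩ := four_id (W * u)
  rw [he]
  exact ((((key _).mul_right _).add ((key _).mul_right _)).add ((key _).mul_right _)).add
    ((key _).mul_right _) |>.mul_left _

theorem mp_coeff (P D : Hq[X]) (n : ℕ) :
    (mp P D).coeff n = inl (P.coeff n) + inr (D.coeff n) := by
  simp only [mp, dhQ, coeff_add, coeff_map, coeff_C_mul]
  ext <;> simp

theorem mp_inj {P D P' D' : Hq[X]} (h : mp P D = mp P' D') : P = P' ∧ D = D' := by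
  constructor
  · ext1 n
    have := congrArg (fun A : DHq[X] => (A.coeff n).fst) h
    simpa [mp_coeff] using this
  · ext1 n
    have := congrArg (fun A : DHq[X] => (A.coeff n).snd) h
    simpa [mp_coeff] using this

theorem dhQ_mul (P D : Hq[X]) : dhQ (P * D) = dhQ P * dhQ D := by simp [dhQ]
theorem dhQ_add (P D : Hq[X]) : dhQ (P + D) = dhQ P + dhQ D := by simp [dhQ]

theorem eps_comm (P : DHq[X]) : C (ε : DHq) * P = P * C ε := by
  ext1 n
  rw [coeff_C_mul, coeff_mul_C]
  ext <;> simp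

theorem mp_mul (P D P' D' : Hq[X]) : mp P D * mp P' D' = mp (P * P') (P * D' + D * P') := by
  simp only [mp, dhQ_mul, dhQ_add]
  have h0 : (C (ε : DHq) * dhQ D) * (C ε * dhQ D') = 0 := by
    rw [eps_comm, mul_assoc, ← mul_assoc (C ε) (C ε), ← C_mul, DualNumber.eps_mul_eps]
    simp
  rw [add_mul, mul_add, mul_add, h0, ← mul_assoc (dhQ P) (C ε), ← eps_comm, mul_add]
  simp only [mul_assoc]
  abel

theorem cstar_mp (P D : Hq[X]) : cstar (mp P D) = mp (cstar P) (cstar D) := by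
  ext1 n
  rw [cstar_coeff_d, mp_coeff, mp_coeff, star_dh, cstar_coeff_q, cstar_coeff_q]
  simp

theorem dPoly_eq (f : ℝ[X]) : dPoly f = mp (qPoly f) 0 := by
  simp [dPoly, mp, dhQ]

theorem X_sub_C_eq (h : DHq) : X - C h = mp (X - C h.fst) (-C h.snd) := by
  ext1 n
  rw [mp_coeff, coeff_sub, coeff_sub, coeff_neg, coeff_C, coeff_X, coeff_C, coeff_X, coeff_C]
  ext <;> split_ifs <;> simp

theorem motion_mp {P D : Hq[X]} (h : IsMotion (mp P D)) : P * cstar D + D * cstar P = 0 := by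
  obtain ⟨f, -, hf⟩ := h
  rw [cstar_mp, mp_mul, dPoly_eq] at hf
  exact (mp_inj hf).2

theorem mot_list (L : List DHq) (hL : ∀ h ∈ L, IsMotion (X - C h)) :
    ∃ P D, (L.map fun h => X - C h).prod = mp P D ∧ P * cstar D + D * cstar P = 0 := by
  induction L with
  | nil => exact ⟨1, 0, by simp [mp, dhQ], by
      have : cstar (0 : Hq[X]) = 0 := by simp [cstar]
      simp [this]⟩
  | cons a L ih =>
    obtain ⟨P, D, h1, h2⟩ := ih fun h hh => hL h (List.mem_cons_of_mem _ hh)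
    have h3 := hL a List.mem_cons_self
    rw [X_sub_C_eq] at h3
    have h4 := motion_mp h3
    rw [List.map_cons, List.prod_cons, h1, X_sub_C_eq, mp_mul]
    refine ⟨_, _, rfl, ?_⟩
    generalize X - C a.fst = P1 at *
    generalize -C a.snd = D1 at *
    rw [cstar_add_q, cstar_mul_q, cstar_mul_q, cstar_mul_q]
    obtain ⟨f, hf, -⟩ := exists_nu P
    have e : P1 * P * (cstar D * cstar P1 + cstar P * cstar D1)
        + (P1 * D + D1 * P) * (cstar P * cstar P1)
        = P1 * (P * cstar D + D * cstar P) * cstar P1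
        + (P1 * (P * cstar P) * cstar D1 + D1 * (P * cstar P) * cstar P1) := by noncomm_ring
    rw [e, h2, hf, ← qPoly_comm f P1, ← qPoly_comm f D1, mul_assoc (qPoly f),
      mul_assoc (qPoly f), ← mul_add, h4]
    simp

theorem natDegree_qPoly (f : ℝ[X]) : (qPoly f).natDegree = f.natDegree := by
  simp [qPoly]

theorem coreB {N c : ℝ[X]} {D' : Hq[X]} {m : ℕ} (hN : Irreducible N) (hN2 : N.natDegree = 2)
    (hNc : N ∣ c) (hcN : c ∣ N ^ m) (hC : HasLinFact (mp (qPoly c) D')) :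
    cstar D' = -D' ∧ RDvdQ N (D' * D') := by
  have hc0 : c ≠ 0 := fun h => by
    rw [h] at hcN; exact pow_ne_zero m hN.ne_zero (zero_dvd_iff.1 hcN)
  obtain ⟨L, hL, hprod⟩ := hC
  have hst : cstar D' = -D' := by
    obtain ⟨P, D, h1, h2⟩ := mot_list L hL
    obtain ⟨rfl, rfl⟩ := mp_inj (hprod.trans h1)
    rw [cstar_qPoly, ← qPoly_comm, ← mul_add] at h2
    exact eq_neg_of_add_eq_zero_left ((mul_eq_zero.1 h2).resolve_left (qPoly_ne hc0))
  refine ⟨hst, ?_⟩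
  cases L with
  | nil =>
    exfalso
    have : mp (qPoly c) D' = mp (qPoly 1) 0 := by rw [hprod]; simp [mp, dhQ, qPoly]
    have := qPoly_inj (mp_inj this).1
    rw [this] at hNc
    exact hN.not_isUnit (isUnit_of_dvd_one hNc)
  | cons a L =>
    obtain ⟨R, D2, h1, -⟩ := mot_list L fun h hh => hL h (List.mem_cons_of_mem _ hh)
    have h3 := hL a List.mem_cons_self
    rw [X_sub_C_eq] at h3
    have h4 := motion_mp h3
    rw [List.map_cons, List.prod_cons, h1, X_sub_C_eq, mp_mul] at hprod
    obtain ⟨h5, h6⟩ := mp_inj hprod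
    set p := a.fst
    set d := a.snd
    have hdeg : ((X - C p) * cstar (X - C p)).natDegree = 2 := by
      rw [cstar_X_sub_C_q, natDegree_mul (X_sub_C_ne_zero _) (X_sub_C_ne_zero _),
        natDegree_X_sub_C, natDegree_X_sub_C]
    have h7 : d + star d = 0 := by
      have := congrArg (fun A : Hq[X] => A.coeff 1) h4
      simp only [cstar_neg_q, cstar_X_sub_C_q, cstar_C_q, coeff_add, mul_neg, neg_mul, coeff_neg,
        sub_mul, mul_sub, coeff_sub, coeff_X_mul, coeff_mul_X, coeff_C_mul, coeff_C,
        coeff_zero] at this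
      simp only [coeff_C, if_pos, one_ne_zero, if_false, mul_zero, sub_zero] at this
      have h8 := congrArg Neg.neg this
      simp at h8
      rw [← h8]
    have hsd : star d = -d := eq_neg_of_add_eq_zero_right h7
    generalize hP : X - C p = P at *
    have hdP : C d * cstar P = P * C d := by
      rw [cstar_neg_q, cstar_C_q, hsd, C_neg, neg_neg, neg_mul] at h4
      exact (eq_of_sub_eq_zero (by rw [← h4]; abel)).symm
    obtain ⟨f, hf, hf'⟩ := exists_nu P
    obtain ⟨r, hr, -⟩ := exists_nu R
    rw [hf, natDegree_qPoly] at hdeg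
    have hfr : f * r = c * c := by
      apply qPoly_inj
      calc qPoly (f * r) = P * (R * cstar R) * cstar P := by
            rw [hr, ← qPoly_comm, mul_assoc, hf, qPoly_mul, qPoly_comm]
        _ = qPoly c * cstar (qPoly c) := by rw [h5, cstar_mul_q]; noncomm_ring
        _ = _ := by rw [cstar_qPoly, qPoly_mul]
    have hfN : f ∣ N ^ (m + m) := (Dvd.intro _ hfr).trans (by rw [pow_add]; exact mul_dvd_mul hcN hcN)
    obtain ⟨j, -, hj⟩ := (dvd_prime_pow hN.prime _).1 hfN
    have hj1 : j = 1 := by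
      have := natDegree_eq_of_degree_eq (degree_eq_degree_of_associated hj)
      rw [hdeg, natDegree_pow, hN2] at this
      omega
    rw [hj1, pow_one] at hj
    obtain ⟨c', hc'⟩ := hj.dvd.trans hNc
    have hf0 : f ≠ 0 := fun h => by rw [h] at hdeg; simp at hdeg
    have hdR : C d * R = P * (C d * qPoly c') := by
      apply mul_left_cancel₀ (qPoly_ne hf0)
      calc qPoly f * (C d * R) = C d * (qPoly f) * R := by rw [← mul_assoc, qPoly_comm]
        _ = (C d * cstar P) * (P * R) := by rw [← hf']; noncomm_ring
        _ = P * C d * (qPoly f * qPoly c') := by rw [hdP, ← h5, hc', qPoly_mul]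
        _ = _ := by rw [← mul_assoc, ← qPoly_comm f]; simp only [mul_assoc]
    have hD : D' = P * (D2 - C d * qPoly c') := by
      rw [h6, neg_mul, hdR, mul_sub]; abel
    obtain ⟨g, hg, -⟩ := exists_nu (D2 - C d * qPoly c')
    have h9 : D' * cstar D' = qPoly f * qPoly g := by
      rw [hD, cstar_mul_q]
      calc _ = P * ((D2 - C d * qPoly c') * cstar (D2 - C d * qPoly c')) * cstar P := by
            noncomm_ring
        _ = _ := by rw [hg, ← qPoly_comm, mul_assoc, hf, qPoly_comm]
    have h10 : RDvdQ N (D' * cstar D') := by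
      rw [h9]; exact (RDvdQ.of_dvd hj.symm.dvd).mul_right _
    rw [hst] at h10
    simpa using h10.neg

end Helpers

/-- In a three-part factorization of a primary-norm motion polynomial, `g_L` divides
`ν(Q_L)` and `g_R` divides `ν(Q_R)`. -/
theorem gcd_divides_outer_norms
    (n : ℕ) (c : ℝ[X]) (Q D : Hq[X]) (N : ℝ[X]) (M : DHq[X])
    (QL QR DL DR D' : Hq[X]) (gL gR : ℝ[X])
    (hM : M = mp (qPoly c * Q) D)
    (hc : c.Monic) (hmonic : M.Monic) (hmotion : IsMotion M)
    (hred : ReducedD M) (hbdd : BoundedD M) (hQred : ReducedQ Q)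
    (hdeg : M.natDegree = n)
    (hN2 : N.natDegree = 2) (hNirr : Irreducible N)
    (hQnorm : qPoly (c ^ 2) * (Q * cstar Q) = qPoly (N ^ n))
    (hnorm : M * cstar M = dPoly (N ^ n))
    (hsplit : M = mp QL DL * mp (qPoly c) D' * mp QR DR)
    (hL : HasLinFact (mp QL DL)) (hC : HasLinFact (mp (qPoly c) D'))
    (hR : HasLinFact (mp QR DR))
    (hgL : IsMrpf2 gL c (cstar Q * D)) (hgR : IsMrpf2 gR c (D * cstar Q)) :
    RDvdQ gL (QL * cstar QL) ∧ RDvdQ gR (QR * cstar QR) := by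
  have hN0 := hNirr.ne_zero
  have hc0 : c ≠ 0 := hc.ne_zero
  have hMM := hM
  rw [hsplit, mp_mul, mp_mul] at hMM
  obtain ⟨e1, e2⟩ := mp_inj hMM
  have hQ : Q = QL * QR := by
    apply mul_left_cancel₀ (qPoly_ne hc0)
    rw [← e1, ← qPoly_comm, mul_assoc]
  obtain ⟨q, hq, -⟩ := exists_nu Q
  obtain ⟨l, hl, hl'⟩ := exists_nu QL
  obtain ⟨r, hr, -⟩ := exists_nu QR
  have hqN : c ^ 2 * q = N ^ n := by
    apply qPoly_inj; rw [← hQnorm, hq, qPoly_mul]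
  have hlr : l * r = q := by
    apply qPoly_inj
    rw [← hq, hQ, cstar_mul_q]
    calc qPoly (l * r) = QL * (QR * cstar QR) * cstar QL := by
          rw [hr, ← qPoly_comm, mul_assoc, hl, qPoly_mul, qPoly_comm]
      _ = _ := by noncomm_ring
  have hcN : c ∣ N ^ n := (Dvd.intro _ (by rw [← hqN]; ring : c * (c * q) = N ^ n))
  have hqd : q ∣ N ^ n := Dvd.intro_left _ hqN
  have hlN : l ∣ N ^ n := (Dvd.intro _ hlr).trans hqd
  have hrN : r ∣ N ^ n := (Dvd.intro_left _ hlr).trans hqd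
  have hno : N ∣ c → ¬ RDvdQ N (QL * D' * QR) := by
    intro hNc hdiv
    have hD : RDvdQ N D := by
      rw [← e2]
      have hcc := RDvdQ.of_dvd hNc
      have := ((hcc.mul_left QL).mul_right DR).add
        (hdiv.add ((hcc.mul_left DL).mul_right QR))
      rwa [← add_mul] at this
    have hP : RDvdQ N (qPoly c * Q) := (RDvdQ.of_dvd hNc).mul_right _
    have hass : Associated (normalize N) N := normalize_associated N
    obtain ⟨A, hA⟩ := hP.trans hass.dvd
    obtain ⟨B, hB⟩ := hD.trans hass.dvd
    have h1 := hred (normalize N) (Polynomial.monic_normalize hN0)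
      ⟨mp A B, by rw [hM, hA, hB, dPoly_eq, mp_mul]; simp⟩
    rw [h1] at hass
    exact hNirr.not_isUnit (hass.isUnit isUnit_one)
  have cmp : ∀ g s : ℝ[X], g ∣ N ^ n → s ∣ N ^ n → g ∣ s ∨ s * N ∣ g := by
    intro g s hg hs
    obtain ⟨i, -, hi⟩ := (dvd_prime_pow hNirr.prime _).1 hg
    obtain ⟨j, -, hj⟩ := (dvd_prime_pow hNirr.prime _).1 hs
    rcases le_or_gt i j with h | h
    · left; exact hi.dvd.trans ((pow_dvd_pow N h).trans hj.symm.dvd)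
    · right
      refine (mul_dvd_mul_right hj.dvd N).trans ?_
      rw [← pow_succ]
      exact (pow_dvd_pow N h).trans hi.symm.dvd
  have hl0 : l ≠ 0 := fun h => by
    rw [h] at hlN; exact pow_ne_zero n hN0 (zero_dvd_iff.1 hlN)
  have hr0 : r ≠ 0 := fun h => by
    rw [h] at hrN; exact pow_ne_zero n hN0 (zero_dvd_iff.1 hrN)
  constructor
  · obtain ⟨-, hgc, hgd, -⟩ := hgL
    rw [hl]
    rcases cmp gL l (hgc.trans hcN) hlN with h | h
    · exact RDvdQ.of_dvd h
    exfalso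
    have hNc : N ∣ c := (Dvd.intro_left _ rfl).trans (h.trans hgc)
    obtain ⟨hst, hDD⟩ := coreB hNirr hN2 hNc hcN hC
    have hcc : RDvdQ gL (qPoly c) := RDvdQ.of_dvd hgc
    have h1 : RDvdQ gL (qPoly l * (cstar QR * D' * QR)) := by
      have h2 := hgd.add (((hcc.mul_left (cstar Q * QL)).mul_right DR).add
        ((hcc.mul_left (cstar Q * DL)).mul_right QR)).neg
      convert h2 using 1
      rw [← e2, ← hl', hQ, cstar_mul_q]
      have : qPoly l * (cstar QR * D' * QR) = cstar QR * (cstar QL * QL) * D' * QR := by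
        rw [hl', ← qPoly_comm]; simp only [mul_assoc]
      rw [hl', this]
      noncomm_ring
    have h3 := core hNirr hst hDD (RDvdQ.cancel hl0 (RDvdQ.trans h h1))
    exact hno hNc (by rw [mul_assoc]; exact h3.mul_left _)
  · obtain ⟨-, hgc, hgd, -⟩ := hgR
    rw [hr]
    rcases cmp gR r (hgc.trans hcN) hrN with h | h
    · exact RDvdQ.of_dvd h
    exfalso
    have hNc : N ∣ c := (Dvd.intro_left _ rfl).trans (h.trans hgc)
    obtain ⟨hst, hDD⟩ := coreB hNirr hN2 hNc hcN hC
    have hcc : RDvdQ gR (qPoly c) := RDvdQ.of_dvd hgc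
    have h1 : RDvdQ gR (qPoly r * (QL * D' * cstar QL)) := by
      have h2 := hgd.add (((hcc.mul_left QL).mul_right (DR * cstar Q)).add
        ((hcc.mul_left DL).mul_right (QR * cstar Q))).neg
      convert h2 using 1
      rw [← e2, hQ, cstar_mul_q]
      have : qPoly r * (QL * D' * cstar QL) = QL * D' * (QR * cstar QR) * cstar QL := by
        rw [hr, ← qPoly_comm]; simp only [mul_assoc]
      rw [this]
      noncomm_ring
    have h2 := RDvdQ.cancel hr0 (RDvdQ.trans h h1)
    have h3 := core (u := cstar QL) hNirr hst hDD (by rwa [cstar_cstar_q])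
    have h4 := h3.cstar.neg
    rw [cstar_mul_q, cstar_cstar_q, hst, mul_neg, neg_neg] at h4
    exact hno hNc (h4.mul_right _)
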